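/- arXiv:2107.14487 — 4 statements merged into one kernel-verified Lean document; each statement's English description precedes it below -/
import Mathlib

section
/- Let S be a CFCST system over Σ, let x → s ∈ S with s = y₁⋯yₙ, and write R_s wu for the chain R_{y₁}wu₁, R_{y₂}u₁u₂, …, R_{yₙ}uₙ₋₁u. Let Λ := R, R_s wu, R_x wu ⊢ v:⟨y⟩φ, z:φ, Γ and Λ′ := R, R_s wu ⊢ v:⟨y⟩φ, z:φ, Γ. If there exists a propagation path π(v,z) in the propagation graph of Λ with s_π(v,z) ∈ L_S(y), then there exists a propagation path π′(v,z) in the propagation graph of Λ′ with s_{π′}(v,z) ∈ L_S(y); consequently, an application of the propagation rule (Pr_⟨y⟩) followed by the structural rule (p^x_s) can be replaced by an application of (p^x_s) followed by (Pr_⟨y⟩) deriving the same end sequent R, R_s wu ⊢ v:⟨y⟩φ, Γ. -/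
/-!
Labelled sequent calculi for context-free grammar logics with converse.
-/

namespace GrammarLogic

/-- Modal formulae in negation normal form over the alphabet `α`:
literals `p`, `p̄`, and the connectives `∨`, `∧`, `⟨x⟩`, `[x]` (`x ∈ α`). -/
inductive Fml (α : Type) : Type
  | pos : ℕ → Fml α
  | neg : ℕ → Fml α
  | or  : Fml α → Fml α → Fml α
  | and : Fml α → Fml α → Fml α
  | dia : α → Fml α → Fml α
  | box : α → Fml α → Fml α

/-- Multisets of relational atoms `R_x w u` (labels are natural numbers). -/
abbrev RAtms (α : Type) : Type := Multiset (α × ℕ × ℕ)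

/-- Multisets of labelled formulae `w : φ`. -/
abbrev LFmls (α : Type) : Type := Multiset (ℕ × Fml α)

/-- The converse `s̄` of a string: reverse and apply the converse characterwise. -/
def strConv {α : Type} (bar : α → α) (s : List α) : List α := s.reverse.map bar

/-- A context-free converse-closed string rewriting (CFCST) system over `α`
with converse operation `bar`: a finite set of production rules closed under
converses. -/
structure CFCST (α : Type) (bar : α → α) : Type where
  rules : Set (α × List α)
  finite : rules.Finite
  closed : ∀ x s, (x, s) ∈ rules ↔ (bar x, strConv bar s) ∈ rules

/-- One-step rewriting: replace an occurrence of the head of a production rule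
by its body. -/
def OneStep {α : Type} (P : Set (α × List α)) (s t : List α) : Prop :=
  ∃ u v x r, (x, r) ∈ P ∧ s = u ++ x :: v ∧ t = u ++ r ++ v

/-- `Lang P x s` iff `x →*_S s`, i.e. `s ∈ L_S(x)`. -/
def Lang {α : Type} (P : Set (α × List α)) (x : α) (s : List α) : Prop :=
  Relation.ReflTransGen (OneStep P) [x] s

/-- Edges of the propagation graph determined by the relational atoms `R`:
each `R_x w u` in `R` gives an edge `(w,u)` labelled `x` and an edge `(u,w)`
labelled `x̄`. -/
def Edge {α : Type} (bar : α → α) (R : RAtms α) (w u : ℕ) (c : α) : Prop :=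
  (c, w, u) ∈ R ∨ (bar c, u, w) ∈ R

/-- `PPath bar R w u s`: there is a (possibly empty) propagation path from `w`
to `u` in the propagation graph determined by `R` whose string is `s`. -/
inductive PPath {α : Type} (bar : α → α) (R : RAtms α) : ℕ → ℕ → List α → Prop
  | nil (w : ℕ) : PPath bar R w w []
  | cons {w u v : ℕ} {c : α} {s : List α} :
      Edge bar R w u c → PPath bar R u v s → PPath bar R w v (c :: s)

/-- Side condition of the propagation rule `(Pr_⟨x⟩)`: there is a propagation
path from `w` to `u` whose string belongs to `L_S(x)`. -/
def PropCond {α : Type} (bar : α → α) (P : Set (α × List α)) (R : RAtms α)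
    (x : α) (w u : ℕ) : Prop :=
  ∃ s, PPath bar R w u s ∧ Lang P x s

/-- The label `v` occurs in the labelled sequent `R ⊢ Γ`. -/
def occursIn {α : Type} (v : ℕ) (R : RAtms α) (Γ : LFmls α) : Prop :=
  (∃ x w u, (x, w, u) ∈ R ∧ (v = w ∨ v = u)) ∨ ∃ φ, (v, φ) ∈ Γ

/-- `ChainR s w u C`: the multiset `C` is a chain of relational atoms `R_s w u`
(for `s = ε` it is empty and `u = w`). -/
inductive ChainR {α : Type} : List α → ℕ → ℕ → RAtms α → Prop
  | nil (w : ℕ) : ChainR [] w w 0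
  | cons {y : α} {s : List α} {w v u : ℕ} {C : RAtms α} :
      ChainR s v u C → ChainR (y :: s) w u ((y, w, v) ::ₘ C)

/-- Gated labelled sequent calculi for grammar logics.  The rules `(id)`, `(∨r)`,
`(∧r)` and `([x])` are always present; the rules `(⟨x⟩)`, the propagation rules
`(Pr_⟨x⟩)`, the structural rules `(p^x_s)` (for `x → s ∈ P`) and the converse
rules `(C1^x)` are present exactly when the respective gates `gDia`, `gPr`,
`gProd`, `gCnv` hold.  In particular, `Der bar P True False True True` is the
labelled calculus `G3Km(S)` and `Der bar P False True False False` is the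
refined labelled calculus `Km(S)L`. -/
inductive Der {α : Type} (bar : α → α) (P : Set (α × List α))
    (gDia gPr gProd gCnv : Prop) : RAtms α → LFmls α → Prop
  | id (R : RAtms α) (Γ : LFmls α) (w p : ℕ) :
      Der bar P gDia gPr gProd gCnv R ((w, Fml.pos p) ::ₘ (w, Fml.neg p) ::ₘ Γ)
  | orr {R : RAtms α} {Γ : LFmls α} {w : ℕ} {φ ψ : Fml α} :
      Der bar P gDia gPr gProd gCnv R ((w, φ) ::ₘ (w, ψ) ::ₘ Γ) →
      Der bar P gDia gPr gProd gCnv R ((w, Fml.or φ ψ) ::ₘ Γ)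
  | andr {R : RAtms α} {Γ : LFmls α} {w : ℕ} {φ ψ : Fml α} :
      Der bar P gDia gPr gProd gCnv R ((w, φ) ::ₘ Γ) →
      Der bar P gDia gPr gProd gCnv R ((w, ψ) ::ₘ Γ) →
      Der bar P gDia gPr gProd gCnv R ((w, Fml.and φ ψ) ::ₘ Γ)
  | boxr {R : RAtms α} {Γ : LFmls α} {w u : ℕ} {x : α} {φ : Fml α} :
      ¬ occursIn u R ((w, Fml.box x φ) ::ₘ Γ) →
      Der bar P gDia gPr gProd gCnv ((x, w, u) ::ₘ R) ((u, φ) ::ₘ Γ) →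
      Der bar P gDia gPr gProd gCnv R ((w, Fml.box x φ) ::ₘ Γ)
  | diar {R : RAtms α} {Γ : LFmls α} {w u : ℕ} {x : α} {φ : Fml α} :
      gDia →
      Der bar P gDia gPr gProd gCnv ((x, w, u) ::ₘ R)
        ((w, Fml.dia x φ) ::ₘ (u, φ) ::ₘ Γ) →
      Der bar P gDia gPr gProd gCnv ((x, w, u) ::ₘ R) ((w, Fml.dia x φ) ::ₘ Γ)
  | pr {R : RAtms α} {Γ : LFmls α} {w u : ℕ} {x : α} {φ : Fml α} :
      gPr → PropCond bar P R x w u →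
      Der bar P gDia gPr gProd gCnv R ((w, Fml.dia x φ) ::ₘ (u, φ) ::ₘ Γ) →
      Der bar P gDia gPr gProd gCnv R ((w, Fml.dia x φ) ::ₘ Γ)
  | prodr {R C : RAtms α} {Γ : LFmls α} {x : α} {s : List α} {w u : ℕ} :
      gProd → (x, s) ∈ P → ChainR s w u C →
      Der bar P gDia gPr gProd gCnv (C + ((x, w, u) ::ₘ R)) Γ →
      Der bar P gDia gPr gProd gCnv (C + R) Γ
  | cnvr {R : RAtms α} {Γ : LFmls α} {x : α} {w u : ℕ} :
      gCnv →
      Der bar P gDia gPr gProd gCnv ((x, w, u) ::ₘ (bar x, u, w) ::ₘ R) Γ →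
      Der bar P gDia gPr gProd gCnv ((x, w, u) ::ₘ R) Γ

/-- The labelled calculus `G3Km(S)`. -/
abbrev G3Km {α : Type} (bar : α → α) (S : CFCST α bar) : RAtms α → LFmls α → Prop :=
  Der bar S.rules True False True True

/-- The refined labelled calculus `Km(S)L`. -/
abbrev KmL {α : Type} (bar : α → α) (S : CFCST α bar) : RAtms α → LFmls α → Prop :=
  Der bar S.rules False True False False

/-!
A removed atom `R_x w u` can be simulated in the remaining graph: the chain `R_s w u` spells a path
with string `s`, and `x → s` is a rule, so `w` reaches `u` along a string of `L_S(x)`.  Closure of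
the rules under converse gives the same for the reversed edge `(u,w)`.  Replacing every edge of a
propagation path by such a path rewrites its string letter by letter, so the new string stays in
`L_S(y)`.
-/

section Rewriting

variable {α : Type} {bar : α → α} {P : Set (α × List α)}

/-- The rewriting relation `→*_S` between strings generated by the production rules `P`, so that
`Lang P x s` is `Rewrites P [x] s`. -/
abbrev Rewrites (P : Set (α × List α)) : List α → List α → Prop :=
  Relation.ReflTransGen (OneStep P)

/-- Closure of a rule set under converses, for rule sets that need not be finite.  One direction
suffices as a definition: the converse one follows when `bar` is involutive. -/
def ConverseClosed (bar : α → α) (P : Set (α × List α)) : Prop :=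
  ∀ ⦃x s⦄, (x, s) ∈ P → (bar x, strConv bar s) ∈ P

theorem CFCST.converseClosed (S : CFCST α bar) : ConverseClosed bar S.rules :=
  fun x s => (S.closed x s).1

theorem strConv_cons (c : α) (s : List α) : strConv bar (c :: s) = strConv bar s ++ [bar c] := by
  simp [strConv]

theorem strConv_append (s t : List α) :
    strConv bar (s ++ t) = strConv bar t ++ strConv bar s := by
  simp [strConv]

theorem OneStep.append_left {s t : List α} (p : List α) (h : OneStep P s t) :
    OneStep P (p ++ s) (p ++ t) := by
  obtain ⟨a, b, x, r, hx, rfl, rfl⟩ := h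
  exact ⟨p ++ a, b, x, r, hx, by simp, by simp⟩

theorem OneStep.append_right {s t : List α} (q : List α) (h : OneStep P s t) :
    OneStep P (s ++ q) (t ++ q) := by
  obtain ⟨a, b, x, r, hx, rfl, rfl⟩ := h
  exact ⟨a, b ++ q, x, r, hx, by simp, by simp⟩

theorem OneStep.converse (hP : ConverseClosed bar P) {s t : List α} (h : OneStep P s t) :
    OneStep P (strConv bar s) (strConv bar t) := by
  obtain ⟨a, b, x, r, hx, rfl, rfl⟩ := h
  refine ⟨strConv bar b, strConv bar a, bar x, _, hP hx, ?_, ?_⟩ <;>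
    simp [strConv_append, strConv_cons]

theorem Rewrites.append {s s' t t' : List α} (hs : Rewrites P s s') (ht : Rewrites P t t') :
    Rewrites P (s ++ t) (s' ++ t') :=
  (hs.lift (· ++ t) fun _ _ h => h.append_right t).trans
    (ht.lift (s' ++ ·) fun _ _ h => h.append_left s')

theorem Rewrites.converse (hP : ConverseClosed bar P) {s t : List α} (h : Rewrites P s t) :
    Rewrites P (strConv bar s) (strConv bar t) :=
  h.lift (strConv bar) fun _ _ h => h.converse hP

theorem Lang.of_rule {x : α} {s : List α} (h : (x, s) ∈ P) : Lang P x s :=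
  .single ⟨[], [], x, s, h, by simp, by simp⟩

theorem Lang.converse (hP : ConverseClosed bar P) {x : α} {s : List α} (h : Lang P x s) :
    Lang P (bar x) (strConv bar s) :=
  Rewrites.converse hP h

end Rewriting

section Propagation

variable {α : Type} {bar : α → α} {P : Set (α × List α)} {R R' : RAtms α}

theorem Edge.symm (hbar : Function.Involutive bar) {a b : ℕ} {c : α} (h : Edge bar R a b c) :
    Edge bar R b a (bar c) :=
  (Or.symm h).imp_right fun hc => by rwa [hbar c]

theorem PPath.single {a b : ℕ} {c : α} (h : Edge bar R a b c) : PPath bar R a b [c] :=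
  .cons h (.nil b)

theorem PPath.append {a b c : ℕ} {s t : List α} (hs : PPath bar R a b s)
    (ht : PPath bar R b c t) : PPath bar R a c (s ++ t) := by
  induction hs with
  | nil => exact ht
  | cons e _ ih => exact .cons e (ih ht)

theorem PPath.reverse (hbar : Function.Involutive bar) {a b : ℕ} {s : List α}
    (h : PPath bar R a b s) : PPath bar R b a (strConv bar s) := by
  induction h with
  | nil w => exact .nil w
  | cons e _ ih =>
    rw [strConv_cons]
    exact ih.append (.single (e.symm hbar))

theorem PPath.mono (hR : R ⊆ R') {a b : ℕ} {s : List α} (h : PPath bar R a b s) :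
    PPath bar R' a b s := by
  induction h with
  | nil w => exact .nil w
  | cons e _ ih => exact .cons (e.imp (@hR _) (@hR _)) ih

theorem ChainR.pPath {s : List α} {w u : ℕ} {C : RAtms α} (h : ChainR s w u C) :
    PPath bar C w u s := by
  induction h with
  | nil w => exact .nil w
  | cons _ ih =>
    exact .cons (.inl (Multiset.mem_cons_self _ _)) (ih.mono (Multiset.subset_cons _ _))

theorem PropCond.of_mem {x : α} {w u : ℕ} (h : (x, w, u) ∈ R) : PropCond bar P R x w u :=
  ⟨[x], .single (.inl h), .refl⟩

theorem PropCond.symm (hbar : Function.Involutive bar) (hP : ConverseClosed bar P) {x : α}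
    {w u : ℕ} (h : PropCond bar P R x w u) : PropCond bar P R (bar x) u w := by
  obtain ⟨s, hpath, hs⟩ := h
  exact ⟨strConv bar s, hpath.reverse hbar, hs.converse hP⟩

theorem PropCond.of_rule {x : α} {s : List α} (hxs : (x, s) ∈ P) {w u : ℕ} {C : RAtms α}
    (hC : ChainR s w u C) (hCR : C ⊆ R) : PropCond bar P R x w u :=
  ⟨s, hC.pPath.mono hCR, .of_rule hxs⟩

theorem PPath.exists_rewrites (hR : ∀ {a b c}, Edge bar R a b c → PropCond bar P R' c a b)
    {a b : ℕ} {s : List α} (h : PPath bar R a b s) :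
    ∃ t, PPath bar R' a b t ∧ Rewrites P s t := by
  induction h with
  | nil w => exact ⟨[], .nil w, .refl⟩
  | cons e _ ih =>
    obtain ⟨r, hr, hcr⟩ := hR e
    obtain ⟨t, ht, hst⟩ := ih
    exact ⟨r ++ t, hr.append ht, Rewrites.append hcr hst⟩

theorem PropCond.of_atoms (hbar : Function.Involutive bar) (hP : ConverseClosed bar P)
    (hR : ∀ {c a b}, (c, a, b) ∈ R → PropCond bar P R' c a b) {y : α} {v z : ℕ}
    (h : PropCond bar P R y v z) : PropCond bar P R' y v z := by
  have edge_simulated {a b c} : Edge bar R a b c → PropCond bar P R' c a b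
    | .inl hc => hR hc
    | .inr hc => hbar c ▸ (hR hc).symm hbar hP
  obtain ⟨s, hpath, hs⟩ := h
  obtain ⟨t, hpath', hst⟩ := hpath.exists_rewrites edge_simulated
  exact ⟨t, hpath', hs.trans hst⟩

theorem PropCond.of_cons (hbar : Function.Involutive bar) (hP : ConverseClosed bar P) {x : α}
    {w u : ℕ} (hx : PropCond bar P R x w u) {y : α} {v z : ℕ}
    (h : PropCond bar P ((x, w, u) ::ₘ R) y v z) : PropCond bar P R y v z := by
  refine h.of_atoms hbar hP fun hmem => ?_
  obtain heq | hmem := Multiset.mem_cons.mp hmem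
  · cases heq
    exact hx
  · exact .of_mem hmem

end Propagation

theorem permute_prod_above_pr_general {α : Type} {bar : α → α} (hbar : Function.Involutive bar)
    {P : Set (α × List α)} (hP : ConverseClosed bar P) {gDia gCnv : Prop} {x y : α} {s : List α}
    (hxs : (x, s) ∈ P) {w u v z : ℕ} {C R : RAtms α} (hC : ChainR s w u C) {φ : Fml α}
    {Γ : LFmls α} (hπ : PropCond bar P (C + ((x, w, u) ::ₘ R)) y v z) :
    PropCond bar P (C + R) y v z ∧
      (Der bar P gDia True True gCnv (C + ((x, w, u) ::ₘ R))
          ((v, Fml.dia y φ) ::ₘ (z, φ) ::ₘ Γ) →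
        Der bar P gDia True True gCnv (C + R) ((v, Fml.dia y φ) ::ₘ Γ)) := by
  have atom_simulated : PropCond bar P (C + R) x w u :=
    .of_rule hxs hC (Multiset.subset_of_le (Multiset.le_add_right C R))
  have hπ' : PropCond bar P (C + R) y v z :=
    .of_cons hbar hP atom_simulated (Multiset.add_cons _ C R ▸ hπ)
  exact ⟨hπ', fun premise => .pr trivial hπ' (.prodr trivial hxs hC premise)⟩

/-- Let `S` be a CFCST system, `x → s ∈ S`, and let `C` be a
chain `R_s w u`.  If there is a propagation path `π(v,z)` in the propagation
graph of `Λ := R, R_s wu, R_x wu ⊢ v:⟨y⟩φ, z:φ, Γ` with `s_π(v,z) ∈ L_S(y)`,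
then there is a propagation path `π'(v,z)` in the propagation graph of
`Λ' := R, R_s wu ⊢ v:⟨y⟩φ, z:φ, Γ` with `s_{π'}(v,z) ∈ L_S(y)`; consequently an
application of `(Pr_⟨y⟩)` followed by `(p^x_s)` can be replaced by `(p^x_s)`
followed by `(Pr_⟨y⟩)`, deriving the same end sequent `R, R_s wu ⊢ v:⟨y⟩φ, Γ`. -/
theorem permute_prod_above_pr {α : Type} (bar : α → α)
    (hbar : Function.Involutive bar) (S : CFCST α bar)
    (x y : α) (s : List α) (hxs : (x, s) ∈ S.rules)
    (w u v z : ℕ) (C R : RAtms α) (hC : ChainR s w u C)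
    (φ : Fml α) (Γ : LFmls α)
    (hπ : PropCond bar S.rules (C + ((x, w, u) ::ₘ R)) y v z) :
    PropCond bar S.rules (C + R) y v z ∧
      (Der bar S.rules True True True True (C + ((x, w, u) ::ₘ R))
          ((v, Fml.dia y φ) ::ₘ (z, φ) ::ₘ Γ) →
        Der bar S.rules True True True True (C + R) ((v, Fml.dia y φ) ::ₘ Γ)) :=
  permute_prod_above_pr_general hbar S.converseClosed hxs hC hπ

end GrammarLogic
end

section
/- Let S be a CFCST system over Σ. Every derivation in Km(S)L of a labelled sequent of the form ∅ ⊢ w:φ is a labelled tree derivation with the fixed root property, with root w. -/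
/-!
Labelled sequent calculi for context-free grammar logics with converse.
-/

namespace GrammarLogic

/-- Derivations (proof trees) in the refined labelled calculus `Km(S)L`. -/
inductive DTree {α : Type} (bar : α → α) (P : Set (α × List α)) :
    RAtms α → LFmls α → Type
  | id (R : RAtms α) (Γ : LFmls α) (w p : ℕ) :
      DTree bar P R ((w, Fml.pos p) ::ₘ (w, Fml.neg p) ::ₘ Γ)
  | orr (R : RAtms α) (Γ : LFmls α) (w : ℕ) (φ ψ : Fml α) :
      DTree bar P R ((w, φ) ::ₘ (w, ψ) ::ₘ Γ) →
      DTree bar P R ((w, Fml.or φ ψ) ::ₘ Γ)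
  | andr (R : RAtms α) (Γ : LFmls α) (w : ℕ) (φ ψ : Fml α) :
      DTree bar P R ((w, φ) ::ₘ Γ) → DTree bar P R ((w, ψ) ::ₘ Γ) →
      DTree bar P R ((w, Fml.and φ ψ) ::ₘ Γ)
  | boxr (R : RAtms α) (Γ : LFmls α) (w u : ℕ) (x : α) (φ : Fml α) :
      ¬ occursIn u R ((w, Fml.box x φ) ::ₘ Γ) →
      DTree bar P ((x, w, u) ::ₘ R) ((u, φ) ::ₘ Γ) →
      DTree bar P R ((w, Fml.box x φ) ::ₘ Γ)
  | pr (R : RAtms α) (Γ : LFmls α) (w u : ℕ) (x : α) (φ : Fml α) :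
      PropCond bar P R x w u →
      DTree bar P R ((w, Fml.dia x φ) ::ₘ (u, φ) ::ₘ Γ) →
      DTree bar P R ((w, Fml.dia x φ) ::ₘ Γ)

/-- `InDer d R' Γ'`: the labelled sequent `R' ⊢ Γ'` occurs in the derivation `d`. -/
inductive InDer {α : Type} {bar : α → α} {P : Set (α × List α)} :
    ∀ {R : RAtms α} {Γ : LFmls α}, DTree bar P R Γ → RAtms α → LFmls α → Prop
  | here {R : RAtms α} {Γ : LFmls α} (d : DTree bar P R Γ) : InDer d R Γ
  | orr {R : RAtms α} {Γ : LFmls α} {w : ℕ} {φ ψ : Fml α}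
      {R' : RAtms α} {Γ' : LFmls α}
      (d : DTree bar P R ((w, φ) ::ₘ (w, ψ) ::ₘ Γ)) :
      InDer d R' Γ' → InDer (DTree.orr R Γ w φ ψ d) R' Γ'
  | andrL {R : RAtms α} {Γ : LFmls α} {w : ℕ} {φ ψ : Fml α}
      {R' : RAtms α} {Γ' : LFmls α}
      (d₁ : DTree bar P R ((w, φ) ::ₘ Γ)) (d₂ : DTree bar P R ((w, ψ) ::ₘ Γ)) :
      InDer d₁ R' Γ' → InDer (DTree.andr R Γ w φ ψ d₁ d₂) R' Γ'
  | andrR {R : RAtms α} {Γ : LFmls α} {w : ℕ} {φ ψ : Fml α}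
      {R' : RAtms α} {Γ' : LFmls α}
      (d₁ : DTree bar P R ((w, φ) ::ₘ Γ)) (d₂ : DTree bar P R ((w, ψ) ::ₘ Γ)) :
      InDer d₂ R' Γ' → InDer (DTree.andr R Γ w φ ψ d₁ d₂) R' Γ'
  | boxr {R : RAtms α} {Γ : LFmls α} {w u : ℕ} {x : α} {φ : Fml α}
      {R' : RAtms α} {Γ' : LFmls α}
      (hf : ¬ occursIn u R ((w, Fml.box x φ) ::ₘ Γ))
      (d : DTree bar P ((x, w, u) ::ₘ R) ((u, φ) ::ₘ Γ)) :
      InDer d R' Γ' → InDer (DTree.boxr R Γ w u x φ hf d) R' Γ'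
  | pr {R : RAtms α} {Γ : LFmls α} {w u : ℕ} {x : α} {φ : Fml α}
      {R' : RAtms α} {Γ' : LFmls α}
      (hp : PropCond bar P R x w u)
      (d : DTree bar P R ((w, Fml.dia x φ) ::ₘ (u, φ) ::ₘ Γ)) :
      InDer d R' Γ' → InDer (DTree.pr R Γ w u x φ hp d) R' Γ'

/-- Directed paths in the sequent graph of a labelled sequent, recorded as the
list of traversed (labelled) edges. -/
inductive TPath {α : Type} (R : RAtms α) : ℕ → ℕ → List (α × ℕ) → Prop
  | nil (w : ℕ) : TPath R w w []
  | cons {w u v : ℕ} {x : α} {l : List (α × ℕ)} :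
      (x, w, u) ∈ R → TPath R u v l → TPath R w v ((x, u) :: l)

/-- `R ⊢ Γ` is a labelled tree sequent with root `r`: its sequent graph is a
tree rooted at `r`, i.e. there is a unique directed path from `r` to every
vertex. -/
def TreeSeq {α : Type} (R : RAtms α) (Γ : LFmls α) (r : ℕ) : Prop :=
  occursIn r R Γ ∧ ∀ v, occursIn v R Γ → ∃! l, TPath R r v l

/-! Read bottom-up, only the box rule changes the vertices or edges of the sequent graph: it hangs a
new leaf below a vertex already present. Paths from the root to the old vertices stay the same, and
a path to the leaf is a path to its parent followed by the new edge. The propagation rule adds no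
vertex, since a propagation path starting at a vertex of the graph stays in the graph. -/

section

variable {α : Type} {bar : α → α} {P : Set (α × List α)} {R R' : RAtms α} {Γ Γ' : LFmls α}
  {φ : Fml α} {a b r u v w : ℕ} {x : α} {l : List (α × ℕ)}

theorem occursIn_cons_fml : occursIn v R ((w, φ) ::ₘ Γ) ↔ v = w ∨ occursIn v R Γ := by
  simp only [occursIn, Multiset.mem_cons, Prod.mk.injEq, exists_or, exists_and_left, exists_eq,
    and_true]
  exact or_left_comm

theorem occursIn_cons_fml_self : occursIn w R ((w, φ) ::ₘ Γ) :=
  occursIn_cons_fml.2 (.inl rfl)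

theorem occursIn_cons_atom :
    occursIn v ((x, w, u) ::ₘ R) Γ ↔ v = w ∨ v = u ∨ occursIn v R Γ := by
  simp [occursIn, or_and_right, exists_or, and_assoc, or_assoc]

theorem occursIn_singleton_fml : occursIn v 0 {(w, φ)} ↔ v = w := by
  simp [occursIn]

theorem occursIn_of_mem_left (h : (x, w, u) ∈ R) : occursIn w R Γ :=
  .inl ⟨x, w, u, h, .inl rfl⟩

theorem occursIn_of_mem_right (h : (x, w, u) ∈ R) : occursIn u R Γ :=
  .inl ⟨x, w, u, h, .inr rfl⟩

theorem Edge.occursIn_right (h : Edge bar R w u x) : occursIn u R Γ :=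
  h.elim occursIn_of_mem_right occursIn_of_mem_left

theorem PPath.occursIn_right {s : List α} (h : PPath bar R w u s) (hw : occursIn w R Γ) :
    occursIn u R Γ := by
  induction h with
  | nil => exact hw
  | cons hedge _ ih => exact ih hedge.occursIn_right

theorem PropCond.occursIn_right (h : PropCond bar P R x w u) (hw : occursIn w R Γ) :
    occursIn u R Γ :=
  let ⟨_, hpath, _⟩ := h
  hpath.occursIn_right hw

namespace TPath

theorem mono (hR : R ⊆ R') (h : TPath R a b l) : TPath R' a b l := by
  induction h with
  | nil => exact .nil _
  | cons hedge _ ih => exact .cons (hR hedge) ih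

theorem snoc (h : TPath R a b l) (hedge : (x, b, v) ∈ R) : TPath R a v (l ++ [(x, v)]) := by
  induction h with
  | nil => exact .cons hedge (.nil _)
  | cons hfirst _ ih => exact .cons hfirst (ih hedge)

theorem eq_nil_or_exists_snoc (h : TPath R a v l) :
    (v = a ∧ l = []) ∨ ∃ b x l', l = l' ++ [(x, v)] ∧ TPath R a b l' ∧ (x, b, v) ∈ R := by
  induction h with
  | nil => exact .inl ⟨rfl, rfl⟩
  | cons hfirst _ ih =>
    rcases ih with ⟨rfl, rfl⟩ | ⟨b, y, l', rfl, hpath, hlast⟩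
    · exact .inr ⟨_, _, [], rfl, .nil _, hfirst⟩
    · exact .inr ⟨b, y, _ :: l', rfl, .cons hfirst hpath, hlast⟩

theorem iff_of_forall_notMem_out (hout : ∀ y b, (y, u, b) ∉ R) :
    TPath R u v l ↔ v = u ∧ l = [] := by
  constructor
  · rintro (_ | ⟨hedge, _⟩)
    · exact ⟨rfl, rfl⟩
    · exact absurd hedge (hout _ _)
  · rintro ⟨rfl, rfl⟩
    exact .nil _

theorem cons_atom_iff_of_ne (hout : ∀ y b, (y, u, b) ∉ (x, w, u) ::ₘ R) (hv : v ≠ u) :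
    TPath ((x, w, u) ::ₘ R) a v l ↔ TPath R a v l := by
  refine ⟨fun h => ?_, mono (Multiset.subset_cons R _)⟩
  induction h with
  | nil => exact .nil _
  | cons hedge hrest ih =>
    rcases Multiset.mem_cons.1 hedge with hnew | hold
    · obtain ⟨rfl, rfl, rfl⟩ := by simpa only [Prod.mk.injEq] using hnew
      exact absurd ((iff_of_forall_notMem_out hout).1 hrest).1 hv
    · exact .cons hold (ih hv)

theorem cons_atom_leaf_iff (hout : ∀ y b, (y, u, b) ∉ (x, w, u) ::ₘ R)
    (hin : ∀ y b, (y, b, u) ∉ R) (ha : a ≠ u) :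
    TPath ((x, w, u) ::ₘ R) a u l ↔ ∃ l', l = l' ++ [(x, u)] ∧ TPath R a w l' := by
  have hwu : w ≠ u := fun h => hout x u (h ▸ Multiset.mem_cons_self _ _)
  constructor
  · intro h
    rcases h.eq_nil_or_exists_snoc with ⟨hua, _⟩ | ⟨b, y, l', rfl, hpath, hlast⟩
    · exact absurd hua.symm ha
    · obtain ⟨rfl, rfl, -⟩ := by
        simpa only [Prod.mk.injEq] using (Multiset.mem_cons.1 hlast).resolve_right (hin y b)
      exact ⟨l', rfl, (cons_atom_iff_of_ne hout hwu).1 hpath⟩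
  · rintro ⟨l', rfl, hpath⟩
    exact ((cons_atom_iff_of_ne hout hwu).2 hpath).snoc (Multiset.mem_cons_self _ _)

end TPath

namespace TreeSeq

theorem singleton (w : ℕ) (φ : Fml α) : TreeSeq 0 {(w, φ)} w := by
  refine ⟨occursIn_singleton_fml.2 rfl, fun v hv => ?_⟩
  obtain rfl := occursIn_singleton_fml.1 hv
  simp only [TPath.iff_of_forall_notMem_out fun _ _ => Multiset.notMem_zero _, true_and,
    existsUnique_eq]

theorem congr (h : TreeSeq R Γ r) (hocc : ∀ v, occursIn v R Γ' ↔ occursIn v R Γ) :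
    TreeSeq R Γ' r :=
  ⟨(hocc r).2 h.1, fun v hv => h.2 v ((hocc v).1 hv)⟩

theorem cons_atom_of_fresh (h : TreeSeq R Γ r) (x : α) (hw : occursIn w R Γ)
    (hu : ¬ occursIn u R Γ) : TreeSeq ((x, w, u) ::ₘ R) Γ r := by
  have hwu : w ≠ u := fun e => hu (e ▸ hw)
  have hru : r ≠ u := fun e => hu (e ▸ h.1)
  have hin : ∀ y b, (y, b, u) ∉ R := fun _ _ hm => hu (occursIn_of_mem_right hm)
  have hout : ∀ y b, (y, u, b) ∉ (x, w, u) ::ₘ R := fun y b hm => by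
    rcases Multiset.mem_cons.1 hm with hnew | hold
    · exact hwu (congrArg (·.2.1) hnew).symm
    · exact hu (occursIn_of_mem_left hold)
  refine ⟨occursIn_cons_atom.2 (.inr (.inr h.1)), fun v hv => ?_⟩
  obtain rfl | hvu := eq_or_ne v u
  · obtain ⟨l, hl, hunique⟩ := h.2 w hw
    simp only [TPath.cons_atom_leaf_iff hout hin hru]
    refine ⟨l ++ [(x, v)], ⟨l, rfl, hl⟩, ?_⟩
    rintro _ ⟨l', rfl, hl'⟩
    rw [hunique l' hl']
  · have hvR : occursIn v R Γ := by
      rcases occursIn_cons_atom.1 hv with rfl | hvu' | hvR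
      exacts [hw, absurd hvu' hvu, hvR]
    simpa only [TPath.cons_atom_iff_of_ne hout hvu] using h.2 v hvR

theorem box_premise (h : TreeSeq R ((w, .box x φ) ::ₘ Γ) r)
    (hu : ¬ occursIn u R ((w, .box x φ) ::ₘ Γ)) :
    TreeSeq ((x, w, u) ::ₘ R) ((u, φ) ::ₘ Γ) r := by
  refine (h.cons_atom_of_fresh x occursIn_cons_fml_self hu).congr fun v => ?_
  simp only [occursIn_cons_fml, occursIn_cons_atom]
  tauto

theorem cons_fml_of_occursIn (h : TreeSeq R Γ r) (φ : Fml α) (hu : occursIn u R Γ) :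
    TreeSeq R ((u, φ) ::ₘ Γ) r := by
  refine h.congr fun v => ?_
  rw [occursIn_cons_fml, or_iff_right_of_imp]
  rintro rfl
  exact hu

end TreeSeq

theorem kmL_tree_derivations_general {d : DTree bar P R Γ} (h : InDer d R' Γ')
    (hroot : TreeSeq R Γ r) : TreeSeq R' Γ' r := by
  induction h with
  | here => exact hroot
  | orr _ _ ih => exact ih (hroot.congr fun v => by simp only [occursIn_cons_fml, or_self_left])
  | andrL _ _ _ ih => exact ih (hroot.congr fun v => by simp only [occursIn_cons_fml])
  | andrR _ _ _ ih => exact ih (hroot.congr fun v => by simp only [occursIn_cons_fml])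
  | boxr hfresh _ _ ih => exact ih (hroot.box_premise hfresh)
  | pr hprop _ _ ih =>
    rw [Multiset.cons_swap] at ih
    exact ih (hroot.cons_fml_of_occursIn _ (hprop.occursIn_right occursIn_cons_fml_self))

end

/-- Let `S` be a CFCST system over `Σ`.  Every derivation in
`Km(S)L` of a labelled sequent `∅ ⊢ w:φ` is a labelled tree derivation with
the fixed root property, with root `w`: every sequent occurring in it is a
labelled tree sequent rooted at `w`. -/
theorem kmL_tree_derivations {α : Type} (bar : α → α)
    (hbar : Function.Involutive bar) (S : CFCST α bar)
    (w : ℕ) (φ : Fml α) (d : DTree bar S.rules (0 : RAtms α) ({(w, φ)} : LFmls α))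
    (R' : RAtms α) (Γ' : LFmls α) (h : InDer d R' Γ') :
    TreeSeq R' Γ' w :=
  kmL_tree_derivations_general h (TreeSeq.singleton w φ)

end GrammarLogic
end

section
/- Let S be a CFCST system over Σ and let Λ := R ⊢ Γ. If the labelled sequent R, R_x wu ⊢ Γ is derivable in G3Km(S) and there is a (possibly empty) propagation path π(w,u) in the propagation graph of Λ such that x →*_S s_π(w,u), then R ⊢ Γ is derivable in G3Km(S). -/
/-!
Labelled sequent calculi for context-free grammar logics with converse.
-/

namespace GrammarLogic

/-!
Call an atom `R_x w u` deletable over `R` if, for every `Q` containing `R`, derivability of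
`Q, R_x w u ⊢ Γ` implies that of `Q ⊢ Γ`. Read as accessibility relations on the
labels, the deletable atoms form a frame for the production rules: by `(p^x_s)`, a chain of
deletable atoms spelling `s` makes `R_x w u` deletable whenever `x → s`. Rewriting backwards from
`t` to `x`, a path of deletable atoms spelling some `t ∈ L_S(x)` contracts to one deletable atom
`R_x w u`. By the converse rules, every edge of the propagation graph is deletable.
-/

section StringRelations

variable {α : Type} {V : Type*}

/-- The relation `ρ_s := ρ_{y₁} ∘ ⋯ ∘ ρ_{yₙ}` that a family of accessibility relations `ρ` assigns
to a string `s = y₁⋯yₙ`, composed in diagrammatic order. -/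
def strRel (ρ : α → V → V → Prop) : List α → V → V → Prop
  | [] => Eq
  | c :: s => Relation.Comp (ρ c) (strRel ρ s)

theorem strRel_singleton (ρ : α → V → V → Prop) (x : α) : strRel ρ [x] = ρ x :=
  Relation.comp_eq

theorem strRel_append (ρ : α → V → V → Prop) (s t : List α) :
    strRel ρ (s ++ t) = Relation.Comp (strRel ρ s) (strRel ρ t) := by
  induction s with
  | nil => exact Relation.eq_comp.symm
  | cons c s ih => simp only [List.cons_append, strRel, ih, Relation.comp_assoc]

theorem strRel_le_of_oneStep {P : Set (α × List α)} {ρ : α → V → V → Prop}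
    (hρ : ∀ x s, (x, s) ∈ P → strRel ρ s ≤ ρ x) {s t : List α} (h : OneStep P s t) :
    strRel ρ t ≤ strRel ρ s := by
  obtain ⟨l, r, x, body, hrule, rfl, rfl⟩ := h
  simp only [List.append_assoc, strRel_append]
  rintro w u ⟨a, hl, b, hbody, hr⟩
  exact ⟨a, hl, b, hρ x body hrule a b hbody, hr⟩

theorem strRel_le_of_lang {P : Set (α × List α)} {ρ : α → V → V → Prop}
    (hρ : ∀ x s, (x, s) ∈ P → strRel ρ s ≤ ρ x) {x : α} {t : List α} (h : Lang P x t) :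
    strRel ρ t ≤ ρ x := by
  induction h with
  | refl => exact (strRel_singleton ρ x).le
  | tail _ hstep ih => exact (strRel_le_of_oneStep hρ hstep).trans ih

end StringRelations

section PropagationPaths

variable {α : Type} {bar : α → α} {R R' : RAtms α} {w u : ℕ} {s : List α}

theorem PPath.strRel_of_edge {ρ : α → ℕ → ℕ → Prop} (hρ : ∀ w u c, Edge bar R w u c → ρ c w u)
    (h : PPath bar R w u s) : strRel ρ s w u := by
  induction h with
  | nil w => exact rfl
  | cons hedge _ ih => exact ⟨_, hρ _ _ _ hedge, ih⟩

theorem PPath.map (f : ℕ → ℕ)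
    (hf : ∀ w u c, Edge bar R w u c → Edge bar R' (f w) (f u) c) (h : PPath bar R w u s) :
    PPath bar R' (f w) (f u) s := by
  induction h with
  | nil w => exact .nil (f w)
  | cons hedge _ ih => exact .cons (hf _ _ _ hedge) ih

end PropagationPaths

section Renaming

variable {α : Type} {R : RAtms α} {Γ : LFmls α} {f g : ℕ → ℕ}

/-- The action of a label renaming on relational atoms. -/
abbrev renameAtom (f : ℕ → ℕ) : α × ℕ × ℕ → α × ℕ × ℕ := Prod.map id (Prod.map f f)

/-- The action of a label renaming on labelled formulae. -/
abbrev renameFml (f : ℕ → ℕ) : ℕ × Fml α → ℕ × Fml α := Prod.map f id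

theorem map_renameAtom_congr (h : ∀ v, occursIn v R Γ → f v = g v) :
    R.map (renameAtom f) = R.map (renameAtom g) := by
  refine Multiset.map_congr rfl ?_
  rintro ⟨x, w, u⟩ hmem
  have hw : f w = g w := h w (.inl ⟨x, w, u, hmem, .inl rfl⟩)
  have hu : f u = g u := h u (.inl ⟨x, w, u, hmem, .inr rfl⟩)
  simp only [Prod.map_apply, hw, hu]

theorem map_renameFml_congr (h : ∀ v, occursIn v R Γ → f v = g v) :
    Γ.map (renameFml f) = Γ.map (renameFml g) := by
  refine Multiset.map_congr rfl ?_
  rintro ⟨w, φ⟩ hmem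
  simp only [Prod.map_apply, h w (.inr ⟨φ, hmem⟩)]

theorem exists_not_occursIn (R : RAtms α) (Γ : LFmls α) : ∃ v, ¬ occursIn v R Γ := by
  let labels : Multiset ℕ := R.map (·.2.1) + R.map (·.2.2) + Γ.map (·.1)
  obtain ⟨v, hv⟩ := Infinite.exists_notMem_finset labels.toFinset
  simp only [labels, Multiset.mem_toFinset, Multiset.mem_add, Multiset.mem_map, not_or] at hv
  obtain ⟨⟨hsource, htarget⟩, hfml⟩ := hv
  refine ⟨v, ?_⟩
  rintro (⟨x, w, u, hmem, rfl | rfl⟩ | ⟨φ, hmem⟩)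
  · exact hsource ⟨_, hmem, rfl⟩
  · exact htarget ⟨_, hmem, rfl⟩
  · exact hfml ⟨_, hmem, rfl⟩

theorem ChainR.map {s : List α} {w u : ℕ} {C : RAtms α} (f : ℕ → ℕ) (h : ChainR s w u C) :
    ChainR s (f w) (f u) (C.map (renameAtom f)) := by
  induction h with
  | nil w => exact .nil (f w)
  | cons _ ih => rw [Multiset.map_cons]; exact .cons ih

theorem Edge.map_add {bar : α → α} {w u : ℕ} {c : α} (f : ℕ → ℕ) (Q : RAtms α)
    (h : Edge bar R w u c) : Edge bar (R.map (renameAtom f) + Q) (f w) (f u) c :=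
  h.imp (fun hmem => Multiset.mem_add.2 (.inl (Multiset.mem_map_of_mem (renameAtom f) hmem)))
    (fun hmem => Multiset.mem_add.2 (.inl (Multiset.mem_map_of_mem (renameAtom f) hmem)))

theorem PropCond.map_add {bar : α → α} {P : Set (α × List α)} {x : α} {w u : ℕ} (f : ℕ → ℕ)
    (Q : RAtms α) (h : PropCond bar P R x w u) :
    PropCond bar P (R.map (renameAtom f) + Q) x (f w) (f u) := by
  obtain ⟨s, hpath, hlang⟩ := h
  exact ⟨s, hpath.map f fun _ _ _ => Edge.map_add f Q, hlang⟩

end Renaming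

section Weakening

variable {α : Type} {bar : α → α} {P : Set (α × List α)} {gDia gPr gProd gCnv : Prop}
  {R R' : RAtms α} {Γ : LFmls α}

theorem Der.boxr_of_map_update {f : ℕ → ℕ} {Q : RAtms α} {x : α} {w u v : ℕ} {φ : Fml α}
    (hu : ¬ occursIn u R ((w, Fml.box x φ) ::ₘ Γ))
    (hv : ¬ occursIn v (R.map (renameAtom f) + Q)
      (((w, Fml.box x φ) ::ₘ Γ).map (renameFml f)))
    (h : Der bar P gDia gPr gProd gCnv
      (((x, w, u) ::ₘ R).map (renameAtom (Function.update f u v)) + Q)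
      (((u, φ) ::ₘ Γ).map (renameFml (Function.update f u v)))) :
    Der bar P gDia gPr gProd gCnv (R.map (renameAtom f) + Q)
      (((w, Fml.box x φ) ::ₘ Γ).map (renameFml f)) := by
  have hagree : ∀ a, occursIn a R ((w, Fml.box x φ) ::ₘ Γ) → Function.update f u v a = f a :=
    fun a ha => Function.update_of_ne (by rintro rfl; exact hu ha) v f
  have hw : Function.update f u v w = f w :=
    hagree w (.inr ⟨_, Multiset.mem_cons_self _ _⟩)
  have hR := map_renameAtom_congr hagree
  have hΓ : Γ.map (renameFml (Function.update f u v)) = Γ.map (renameFml f) :=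
    map_renameFml_congr (R := R) fun a ha =>
      hagree a (ha.imp_right fun ⟨ψ, hmem⟩ => ⟨ψ, Multiset.mem_cons_of_mem hmem⟩)
  simp only [Multiset.map_cons, Multiset.cons_add, Prod.map_apply, id_eq, hw, hR, hΓ,
    Function.update_self] at h hv ⊢
  exact .boxr hv h

-- Renaming and weakening are proved together because an added atom may mention the eigenvariable
-- of a `([x])` inference, which must then be renamed before the induction hypothesis applies.
theorem Der.map_add (h : Der bar P gDia gPr gProd gCnv R Γ) (f : ℕ → ℕ) (Q : RAtms α) :
    Der bar P gDia gPr gProd gCnv (R.map (renameAtom f) + Q) (Γ.map (renameFml f)) := by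
  induction h generalizing f with
  | id R Γ w p =>
    simp only [Multiset.map_cons]
    exact .id _ _ _ _
  | orr _ ih =>
    simp only [Multiset.map_cons] at ih ⊢
    exact .orr (ih f)
  | andr _ _ ihφ ihψ =>
    simp only [Multiset.map_cons] at ihφ ihψ ⊢
    exact .andr (ihφ f) (ihψ f)
  | boxr hfresh _ ih =>
    obtain ⟨v, hv⟩ := exists_not_occursIn _ _
    exact .boxr_of_map_update hfresh hv (ih _)
  | diar hgate _ ih =>
    simp only [Multiset.map_cons, Multiset.cons_add] at ih ⊢
    exact .diar hgate (ih f)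
  | pr hgate hprop _ ih =>
    simp only [Multiset.map_cons] at ih ⊢
    exact .pr hgate (hprop.map_add f Q) (ih f)
  | prodr hgate hrule hchain _ ih =>
    simp only [Multiset.map_cons, Multiset.map_add, Multiset.cons_add, add_assoc] at ih ⊢
    exact .prodr hgate hrule (hchain.map f) (ih f)
  | cnvr hgate _ ih =>
    simp only [Multiset.map_cons, Multiset.cons_add] at ih ⊢
    exact .cnvr hgate (ih f)

theorem Der.weaken (h : Der bar P gDia gPr gProd gCnv R Γ) (hle : R ≤ R') :
    Der bar P gDia gPr gProd gCnv R' Γ := by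
  obtain ⟨Q, rfl⟩ := Multiset.le_iff_exists_add.mp hle
  simpa only [renameAtom, renameFml, Prod.map_id, Multiset.map_id] using h.map_add _root_.id Q

end Weakening

section Deletion

variable {α : Type}

/-- The atom `R_x w u` is deletable over `R`, for a calculus given by its set `D` of derivable
sequents. Quantifying over all extensions `Q` of `R` allows several deletable atoms to be
deleted one after the other. -/
def Deletable (D : RAtms α → LFmls α → Prop) (R : RAtms α) (x : α) (w u : ℕ) : Prop :=
  ∀ Q, R ≤ Q → ∀ Γ, D ((x, w, u) ::ₘ Q) Γ → D Q Γ

theorem exists_chainR_of_strRel_deletable {D : RAtms α → LFmls α → Prop} {R : RAtms α}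
    {s : List α} {w u : ℕ} (h : strRel (Deletable D R) s w u) :
    ∃ C, ChainR s w u C ∧ ∀ Q, R ≤ Q → ∀ Γ, D (C + Q) Γ → D Q Γ := by
  induction s generalizing w with
  | nil =>
    obtain rfl : w = u := h
    exact ⟨0, .nil w, fun Q _ Γ hD => by rwa [zero_add] at hD⟩
  | cons c s ih =>
    obtain ⟨v, hatom, hrest⟩ := h
    obtain ⟨C, hchain, hdelete⟩ := ih hrest
    refine ⟨(c, w, v) ::ₘ C, .cons hchain, fun Q hQ Γ hD => hdelete Q hQ Γ ?_⟩
    rw [Multiset.cons_add] at hD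
    exact hatom (C + Q) (hQ.trans (Multiset.le_add_left Q C)) Γ hD

variable {bar : α → α} {P : Set (α × List α)} {gDia gPr gProd gCnv : Prop} {R : RAtms α}
  {x c : α} {w u : ℕ} {s : List α}

theorem deletable_of_rule (hrule : (x, s) ∈ P)
    (h : strRel (Deletable (Der bar P gDia gPr True gCnv) R) s w u) :
    Deletable (Der bar P gDia gPr True gCnv) R x w u := by
  obtain ⟨C, hchain, hdelete⟩ := exists_chainR_of_strRel_deletable h
  intro Q hQ Γ hder
  have hweak := hder.weaken (Multiset.le_add_left _ C)
  exact hdelete Q hQ Γ (.prodr trivial hrule hchain hweak)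

theorem deletable_of_converse_mem (hbar : Function.Involutive bar) (h : (bar c, u, w) ∈ R) :
    Deletable (Der bar P gDia gPr gProd True) R c w u := by
  intro Q hQ Γ hder
  obtain ⟨Q', rfl⟩ := Multiset.exists_cons_of_mem (Multiset.mem_of_le hQ h)
  refine .cnvr trivial ?_
  rwa [hbar c, Multiset.cons_swap]

theorem deletable_of_edge (hbar : Function.Involutive bar) (h : Edge bar R w u c) :
    Deletable (Der bar P gDia gPr gProd True) R c w u := by
  obtain hmem | hmem := h
  · intro Q hQ Γ hder
    -- The second copy of `R_c w u` is deleted as the converse of an added atom `R_c̄ u w`.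
    have hconv : Deletable (Der bar P gDia gPr gProd True) R (bar c) u w :=
      deletable_of_converse_mem hbar (by rwa [hbar c])
    have hcopy : Deletable (Der bar P gDia gPr gProd True) ((bar c, u, w) ::ₘ Q) c w u :=
      deletable_of_converse_mem hbar (Multiset.mem_cons_self _ _)
    have hweak := hder.weaken (Multiset.cons_le_cons _ (Multiset.le_cons_self Q (bar c, u, w)))
    exact hconv Q hQ Γ (hcopy _ le_rfl Γ hweak)
  · exact deletable_of_converse_mem hbar hmem

end Deletion

theorem delete_relational_atom_general {α : Type} {bar : α → α}
    (hbar : Function.Involutive bar) {P : Set (α × List α)} {gDia gPr : Prop}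
    {R : RAtms α} {Γ : LFmls α} {x : α} {w u : ℕ} {t : List α}
    (hder : Der bar P gDia gPr True True ((x, w, u) ::ₘ R) Γ)
    (hpath : PPath bar R w u t) (hlang : Lang P x t) :
    Der bar P gDia gPr True True R Γ := by
  let ρ := Deletable (Der bar P gDia gPr True True) R
  have hpathρ : strRel ρ t w u := hpath.strRel_of_edge fun _ _ _ => deletable_of_edge hbar
  have hframe : ∀ y s, (y, s) ∈ P → strRel ρ s ≤ ρ y :=
    fun _ _ hrule _ _ => deletable_of_rule hrule
  have hatom : ρ x w u := strRel_le_of_lang hframe hlang w u hpathρ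
  exact hatom R le_rfl Γ hder

/-- Let `S` be a CFCST system over `Σ` and `Λ := R ⊢ Γ`.  If
`R, R_x wu ⊢ Γ` is derivable in `G3Km(S)` and there is a (possibly empty)
propagation path `π(w,u)` in the propagation graph of `Λ` such that
`x →*_S s_π(w,u)`, then `R ⊢ Γ` is derivable in `G3Km(S)`. -/
theorem delete_relational_atom {α : Type} (bar : α → α)
    (hbar : Function.Involutive bar) (S : CFCST α bar)
    (R : RAtms α) (Γ : LFmls α) (x : α) (w u : ℕ) (t : List α)
    (hder : G3Km bar S ((x, w, u) ::ₘ R) Γ)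
    (hpath : PPath bar R w u t) (hlang : Lang S.rules x t) :
    G3Km bar S R Γ :=
  delete_relational_atom_general hbar hder hpath hlang

end GrammarLogic
end

section
/- Let S be a CFCST system over Σ. Every labelled sequent derivable in Km(S)L + Str(Km) (i.e. Km(S)L extended with label substitution, weakening, contraction of relational atoms, contraction of labelled formulae, and cut) is derivable in G3Km(S). -/
/-!
Labelled sequent calculi for context-free grammar logics with converse.
-/

namespace GrammarLogic

/-- Substitution of the label `w` for the label `u`. -/
def substLbl (w u v : ℕ) : ℕ := if v = u then w else v

/-- Label substitution on relational atoms. -/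
def substRAtms {α : Type} (w u : ℕ) (R : RAtms α) : RAtms α :=
  R.map fun t => (t.1, substLbl w u t.2.1, substLbl w u t.2.2)

/-- Label substitution on labelled formulae. -/
def substLFmls {α : Type} (w u : ℕ) (Γ : LFmls α) : LFmls α :=
  Γ.map fun t => (substLbl w u t.1, t.2)

/-- The negation-normal-form negation `φ̄` of a formula `φ`. -/
def Fml.negnnf {α : Type} : Fml α → Fml α
  | Fml.pos p => Fml.neg p
  | Fml.neg p => Fml.pos p
  | Fml.or φ ψ => Fml.and φ.negnnf ψ.negnnf
  | Fml.and φ ψ => Fml.or φ.negnnf ψ.negnnf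
  | Fml.dia x φ => Fml.box x φ.negnnf
  | Fml.box x φ => Fml.dia x φ.negnnf

/-- The calculus `Km(S)L + Str(Km)`: the refined labelled calculus `Km(S)L`
extended with label substitution, weakening, contraction of relational atoms,
contraction of labelled formulae, and cut. -/
inductive KmLStr {α : Type} (bar : α → α) (P : Set (α × List α)) :
    RAtms α → LFmls α → Prop
  | id (R : RAtms α) (Γ : LFmls α) (w p : ℕ) :
      KmLStr bar P R ((w, Fml.pos p) ::ₘ (w, Fml.neg p) ::ₘ Γ)
  | orr {R : RAtms α} {Γ : LFmls α} {w : ℕ} {φ ψ : Fml α} :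
      KmLStr bar P R ((w, φ) ::ₘ (w, ψ) ::ₘ Γ) →
      KmLStr bar P R ((w, Fml.or φ ψ) ::ₘ Γ)
  | andr {R : RAtms α} {Γ : LFmls α} {w : ℕ} {φ ψ : Fml α} :
      KmLStr bar P R ((w, φ) ::ₘ Γ) → KmLStr bar P R ((w, ψ) ::ₘ Γ) →
      KmLStr bar P R ((w, Fml.and φ ψ) ::ₘ Γ)
  | boxr {R : RAtms α} {Γ : LFmls α} {w u : ℕ} {x : α} {φ : Fml α} :
      ¬ occursIn u R ((w, Fml.box x φ) ::ₘ Γ) →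
      KmLStr bar P ((x, w, u) ::ₘ R) ((u, φ) ::ₘ Γ) →
      KmLStr bar P R ((w, Fml.box x φ) ::ₘ Γ)
  | pr {R : RAtms α} {Γ : LFmls α} {w u : ℕ} {x : α} {φ : Fml α} :
      PropCond bar P R x w u →
      KmLStr bar P R ((w, Fml.dia x φ) ::ₘ (u, φ) ::ₘ Γ) →
      KmLStr bar P R ((w, Fml.dia x φ) ::ₘ Γ)
  | subst {R : RAtms α} {Γ : LFmls α} (w u : ℕ) :
      KmLStr bar P R Γ → KmLStr bar P (substRAtms w u R) (substLFmls w u Γ)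
  | wk {R R' : RAtms α} {Γ Γ' : LFmls α} :
      KmLStr bar P R Γ → KmLStr bar P (R + R') (Γ + Γ')
  | ctrR {R : RAtms α} {Γ : LFmls α} (a : α × ℕ × ℕ) :
      KmLStr bar P (a ::ₘ a ::ₘ R) Γ → KmLStr bar P (a ::ₘ R) Γ
  | ctrF {R : RAtms α} {Γ : LFmls α} (w : ℕ) (φ : Fml α) :
      KmLStr bar P R ((w, φ) ::ₘ (w, φ) ::ₘ Γ) → KmLStr bar P R ((w, φ) ::ₘ Γ)
  | cut {R : RAtms α} {Γ : LFmls α} (w : ℕ) (φ : Fml α) :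
      KmLStr bar P R ((w, φ) ::ₘ Γ) → KmLStr bar P R ((w, Fml.negnnf φ) ::ₘ Γ) →
      KmLStr bar P R Γ

/-!
Soundness and completeness for frames closed under converses and productions replace any syntactic
treatment of cut and contraction. All rules of `Km(S)L + Str(Km)` preserve truth in such frames.
Conversely, a fair bottom-up proof search in `G3Km(S)` from an underivable sequent produces, in the
limit, a Hintikka set whose accessibility relations consist of all the atoms that `(C1^x)` and
`(p^x_s)` can create; it is a frame for `S`, and it refutes the sequent.
-/

section Semantics

variable {α : Type} {W : Type*} {bar : α → α} {P : Set (α × List α)}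
  {Rel : α → W → W → Prop} {V : W → ℕ → Prop}

/-- Truth of a formula at a world of the Kripke model with accessibility relations `Rel` and
valuation `V`. -/
def Sat (Rel : α → W → W → Prop) (V : W → ℕ → Prop) : W → Fml α → Prop
  | w, .pos p => V w p
  | w, .neg p => ¬ V w p
  | w, .or φ ψ => Sat Rel V w φ ∨ Sat Rel V w ψ
  | w, .and φ ψ => Sat Rel V w φ ∧ Sat Rel V w ψ
  | w, .dia x φ => ∃ u, Rel x w u ∧ Sat Rel V u φ
  | w, .box x φ => ∀ u, Rel x w u → Sat Rel V u φ

theorem sat_negnnf (φ : Fml α) (w : W) : Sat Rel V w φ.negnnf ↔ ¬ Sat Rel V w φ := by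
  induction φ generalizing w with
  | and φ ψ ihφ ihψ => simp only [Fml.negnnf, Sat, ihφ, ihψ, not_and_or]
  | _ => simp [Fml.negnnf, Sat, *]

/-- The relation `R_s` between worlds: the composite of the accessibility relations along the
string `s`. -/
def StringRel (Rel : α → W → W → Prop) : List α → W → W → Prop
  | [], w, u => w = u
  | x :: s, w, u => ∃ v, Rel x w v ∧ StringRel Rel s v u

theorem stringRel_append {s t : List α} {w u : W} :
    StringRel Rel (s ++ t) w u ↔ ∃ v, StringRel Rel s w v ∧ StringRel Rel t v u := by
  induction s generalizing w with
  | nil => simp [StringRel]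
  | cons x s ih =>
    simp only [List.cons_append, StringRel, ih]
    tauto

/-- Frames for the production rules `P`: the accessibility relations respect converses and every
production rule. -/
structure IsFrame (bar : α → α) (P : Set (α × List α)) (Rel : α → W → W → Prop) : Prop where
  conv : ∀ {x w u}, Rel x w u → Rel (bar x) u w
  prod : ∀ {x s w u}, (x, s) ∈ P → StringRel Rel s w u → Rel x w u

theorem IsFrame.stringRel_of_oneStep (hF : IsFrame bar P Rel) {s t : List α} {w u : W}
    (h : OneStep P s t) (ht : StringRel Rel t w u) : StringRel Rel s w u := by
  obtain ⟨a, b, x, r, hr, rfl, rfl⟩ := h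
  simp only [stringRel_append] at ht ⊢
  obtain ⟨v', ⟨v, ha, hrel⟩, hb⟩ := ht
  exact ⟨v, ha, v', hF.prod hr hrel, hb⟩

theorem IsFrame.stringRel_of_reflTransGen (hF : IsFrame bar P Rel) {s t : List α} {w u : W}
    (h : Relation.ReflTransGen (OneStep P) s t) (ht : StringRel Rel t w u) :
    StringRel Rel s w u := by
  induction h using Relation.ReflTransGen.head_induction_on with
  | refl => exact ht
  | head hstep _ ih => exact hF.stringRel_of_oneStep hstep ih

theorem IsFrame.rel_of_lang (hF : IsFrame bar P Rel) {x : α} {s : List α} {w u : W}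
    (h : Lang P x s) (hs : StringRel Rel s w u) : Rel x w u := by
  obtain ⟨v, hrel, rfl⟩ := hF.stringRel_of_reflTransGen h hs
  exact hrel

/-- The labels, read as worlds through `f`, satisfy the relational atoms in `R`. -/
def SatAtoms (Rel : α → W → W → Prop) (f : ℕ → W) (R : RAtms α) : Prop :=
  ∀ x w u, (x, w, u) ∈ R → Rel x (f w) (f u)

theorem SatAtoms.mono {f : ℕ → W} {R R' : RAtms α} (h : SatAtoms Rel f R') (hR : R ⊆ R') :
    SatAtoms Rel f R :=
  fun x w u hm => h x w u (hR hm)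

theorem IsFrame.stringRel_of_pPath (hbar : Function.Involutive bar) (hF : IsFrame bar P Rel)
    {f : ℕ → W} {R : RAtms α} (hf : SatAtoms Rel f R) {s : List α} {w u : ℕ}
    (h : PPath bar R w u s) : StringRel Rel s (f w) (f u) := by
  induction h with
  | nil w => rfl
  | cons hedge _ ih =>
    refine ⟨_, ?_, ih⟩
    rcases hedge with hm | hm
    · exact hf _ _ _ hm
    · simpa only [hbar _] using hF.conv (hf _ _ _ hm)

theorem IsFrame.rel_of_propCond (hbar : Function.Involutive bar) (hF : IsFrame bar P Rel)
    {f : ℕ → W} {R : RAtms α} (hf : SatAtoms Rel f R) {x : α} {w u : ℕ}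
    (h : PropCond bar P R x w u) : Rel x (f w) (f u) :=
  let ⟨_, hpath, hlang⟩ := h
  hF.rel_of_lang hlang (hF.stringRel_of_pPath hbar hf hpath)

/-- Truth of the sequent `R ⊢ Γ` in a model: under every reading of the labels as worlds that
satisfies `R`, some formula of `Γ` is true. -/
def Holds (Rel : α → W → W → Prop) (V : W → ℕ → Prop) (R : RAtms α) (Γ : LFmls α) : Prop :=
  ∀ f : ℕ → W, SatAtoms Rel f R → ∃ a ∈ Γ, Sat Rel V (f a.1) a.2

theorem holds_boxr {R : RAtms α} {Γ : LFmls α} {w u : ℕ} {x : α} {φ : Fml α}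
    (hu : ¬ occursIn u R ((w, .box x φ) ::ₘ Γ))
    (h : Holds Rel V ((x, w, u) ::ₘ R) ((u, φ) ::ₘ Γ)) :
    Holds Rel V R ((w, .box x φ) ::ₘ Γ) := by
  intro f hf
  by_cases hbox : Sat Rel V (f w) (.box x φ)
  · exact ⟨_, Multiset.mem_cons_self _ _, hbox⟩
  obtain ⟨z, hz, hzφ⟩ : ∃ z, Rel x (f w) z ∧ ¬ Sat Rel V z φ := by simpa [Sat] using hbox
  have update_fml : ∀ {v χ}, (v, χ) ∈ (w, .box x φ) ::ₘ Γ → Function.update f u z v = f v :=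
    fun hm => Function.update_of_ne (by rintro rfl; exact hu (.inr ⟨_, hm⟩)) _ _
  have update_atom : SatAtoms Rel (Function.update f u z) R := by
    intro y a b hm
    rw [Function.update_of_ne (by rintro rfl; exact hu (.inl ⟨_, _, _, hm, .inl rfl⟩)),
      Function.update_of_ne (by rintro rfl; exact hu (.inl ⟨_, _, _, hm, .inr rfl⟩))]
    exact hf y a b hm
  obtain ⟨⟨v, χ⟩, hm, hχ⟩ := h (Function.update f u z) <| by
    intro y a b hm
    rcases Multiset.mem_cons.1 hm with heq | hm
    · obtain ⟨rfl, rfl, rfl⟩ : y = x ∧ a = w ∧ b = u := by simpa using heq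
      rwa [update_fml (Multiset.mem_cons_self _ _), Function.update_self]
    · exact update_atom y a b hm
  rcases Multiset.mem_cons.1 hm with heq | hm
  · obtain ⟨rfl, rfl⟩ : v = u ∧ χ = φ := by simpa using heq
    exact absurd (by simpa using hχ) hzφ
  · have hm' : (v, χ) ∈ (w, .box x φ) ::ₘ Γ := Multiset.mem_cons_of_mem hm
    exact ⟨_, hm', by simpa only [update_fml hm'] using hχ⟩

theorem holds_pr (hbar : Function.Involutive bar) (hF : IsFrame bar P Rel)
    {R : RAtms α} {Γ : LFmls α} {w u : ℕ} {x : α} {φ : Fml α} (hp : PropCond bar P R x w u)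
    (h : Holds Rel V R ((w, .dia x φ) ::ₘ (u, φ) ::ₘ Γ)) :
    Holds Rel V R ((w, .dia x φ) ::ₘ Γ) := by
  intro f hf
  have hrel := hF.rel_of_propCond hbar hf hp
  have hΓ := h f hf
  simp only [Multiset.mem_cons, exists_eq_or_imp] at hΓ ⊢
  exact hΓ.elim .inl (Or.imp_left fun hφ => ⟨f u, hrel, hφ⟩)

theorem holds_subst {R : RAtms α} {Γ : LFmls α} (w u : ℕ) (h : Holds Rel V R Γ) :
    Holds Rel V (substRAtms w u R) (substLFmls w u Γ) := by
  intro f hf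
  obtain ⟨a, hm, ha⟩ := h (fun v => f (substLbl w u v))
    fun x v v' hm => hf _ _ _ (Multiset.mem_map_of_mem _ hm)
  exact ⟨_, Multiset.mem_map_of_mem _ hm, ha⟩

theorem holds_cut {R : RAtms α} {Γ : LFmls α} {w : ℕ} {φ : Fml α}
    (h : Holds Rel V R ((w, φ) ::ₘ Γ)) (h' : Holds Rel V R ((w, φ.negnnf) ::ₘ Γ)) :
    Holds Rel V R Γ := by
  intro f hf
  have hφ := h f hf
  have hnφ := h' f hf
  simp only [Multiset.mem_cons, exists_eq_or_imp, sat_negnnf] at hφ hnφ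
  tauto

theorem KmLStr.holds (hbar : Function.Involutive bar) (hF : IsFrame bar P Rel)
    {R : RAtms α} {Γ : LFmls α} (h : KmLStr bar P R Γ) : Holds Rel V R Γ := by
  induction h with
  | id R Γ w p =>
    intro f _
    simp only [Multiset.mem_cons, exists_eq_or_imp, Sat]
    tauto
  | orr _ ih =>
    intro f hf
    simpa only [Multiset.mem_cons, exists_eq_or_imp, Sat, or_assoc] using ih f hf
  | andr _ _ ihφ ihψ =>
    intro f hf
    have hφ := ihφ f hf
    have hψ := ihψ f hf
    simp only [Multiset.mem_cons, exists_eq_or_imp, Sat] at hφ hψ ⊢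
    tauto
  | boxr hu _ ih => exact holds_boxr hu ih
  | pr hp _ ih => exact holds_pr hbar hF hp ih
  | subst w u _ ih => exact holds_subst w u ih
  | wk _ ih =>
    intro f hf
    obtain ⟨a, hm, ha⟩ := ih f (hf.mono (Multiset.subset_of_le (Multiset.le_add_right _ _)))
    exact ⟨a, Multiset.mem_add.2 (.inl hm), ha⟩
  | ctrR a _ ih =>
    intro f hf
    exact ih f (hf.mono (by simp [Multiset.cons_subset]))
  | ctrF w φ _ ih =>
    intro f hf
    simpa using ih f hf
  | cut w φ _ _ ih ih' => exact holds_cut ih ih'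

/-- Hintikka sets of refuted labelled formulae: `H` is closed under the conditions that the falsity
of all its members imposes on their immediate subformulae. -/
structure IsHintikka (Rel : α → W → W → Prop) (H : Set (W × Fml α)) : Prop where
  lit : ∀ {w p}, (w, .pos p) ∈ H → (w, .neg p) ∉ H
  or : ∀ {w φ ψ}, (w, .or φ ψ) ∈ H → (w, φ) ∈ H ∧ (w, ψ) ∈ H
  and : ∀ {w φ ψ}, (w, .and φ ψ) ∈ H → (w, φ) ∈ H ∨ (w, ψ) ∈ H
  dia : ∀ {w u x φ}, (w, .dia x φ) ∈ H → Rel x w u → (u, φ) ∈ H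
  box : ∀ {w x φ}, (w, .box x φ) ∈ H → ∃ u, Rel x w u ∧ (u, φ) ∈ H

theorem IsHintikka.not_sat {H : Set (W × Fml α)} (hH : IsHintikka Rel H) {w : W} {φ : Fml α}
    (h : (w, φ) ∈ H) : ¬ Sat Rel (fun v p => (v, .neg p) ∈ H) w φ := by
  induction φ generalizing w with
  | pos p => exact hH.lit h
  | neg p => exact not_not_intro h
  | or φ ψ ihφ ihψ => exact not_or.2 ((hH.or h).imp ihφ ihψ)
  | and φ ψ ihφ ihψ => exact not_and_or.2 ((hH.and h).imp ihφ ihψ)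
  | dia x φ ih => exact fun ⟨u, hrel, hφ⟩ => ih (hH.dia h hrel) hφ
  | box x φ ih =>
    obtain ⟨u, hrel, hφ⟩ := hH.box h
    exact fun hbox => ih hφ (hbox u hrel)

section DirectedUnion

variable {ι : Type*} [Preorder ι] [IsDirectedOrder ι] {Rels : ι → α → W → W → Prop}

theorem stringRel_mono {Rel' : α → W → W → Prop} (hle : Rel ≤ Rel') {s : List α} {w u : W}
    (h : StringRel Rel s w u) : StringRel Rel' s w u := by
  induction s generalizing w with
  | nil => exact h
  | cons x s ih =>
    obtain ⟨v, hrel, hs⟩ := h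
    exact ⟨v, hle _ _ _ hrel, ih hs⟩

theorem exists_stringRel_of_monotone [Nonempty ι] (hmono : Monotone Rels) {s : List α} {w u : W}
    (h : StringRel (fun x w u => ∃ i, Rels i x w u) s w u) : ∃ i, StringRel (Rels i) s w u := by
  induction s generalizing w with
  | nil => exact ⟨Classical.arbitrary ι, h⟩
  | cons x s ih =>
    obtain ⟨v, ⟨i, hrel⟩, hs⟩ := h
    obtain ⟨j, hs⟩ := ih hs
    obtain ⟨k, hik, hjk⟩ := exists_ge_ge i j
    exact ⟨k, v, hmono hik _ _ _ hrel, stringRel_mono (hmono hjk) hs⟩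

theorem IsFrame.exists_of_monotone [Nonempty ι] (hmono : Monotone Rels)
    (hF : ∀ i, IsFrame bar P (Rels i)) : IsFrame bar P fun x w u => ∃ i, Rels i x w u where
  conv := fun ⟨i, hrel⟩ => ⟨i, (hF i).conv hrel⟩
  prod hr hs :=
    let ⟨i, hs⟩ := exists_stringRel_of_monotone hmono hs
    ⟨i, (hF i).prod hr hs⟩

end DirectedUnion

end Semantics

theorem exists_ge_forall_mem {β ι : Type*} [Preorder β] {Done : ι → β → Prop}
    (mono : ∀ i, Monotone (Done i)) {T : Multiset ι} {a : β}
    (h : ∀ i ∈ T, ∀ b ≥ a, ∃ c ≥ b, Done i c) : ∃ b ≥ a, ∀ i ∈ T, Done i b := by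
  induction T using Multiset.induction_on with
  | empty => exact ⟨a, le_rfl, by simp⟩
  | cons i T ih =>
    obtain ⟨b, hab, hT⟩ := ih fun j hj => h j (Multiset.mem_cons_of_mem hj)
    obtain ⟨c, hbc, hi⟩ := h i (Multiset.mem_cons_self _ _) b hab
    exact ⟨c, hab.trans hbc,
      Multiset.forall_mem_cons.2 ⟨hi, fun j hj => mono j hbc (hT j hj)⟩⟩

section ProofSearch

variable {α : Type} {bar : α → α} {P : Set (α × List α)} {R R' : RAtms α} {Γ : LFmls α}

/-- Derivability in `G3Km` over an arbitrary set of production rules. -/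
abbrev G3KmRules (bar : α → α) (P : Set (α × List α)) : RAtms α → LFmls α → Prop :=
  Der bar P True False True True

/-- `R'` extends `R` without making any further right-hand side derivable; the rules `(C1^x)` and
`(p^x_s)`, read bottom-up, produce such extensions. Only the supports of `R` and `R'` are compared,
so no weakening or contraction is needed to compose extensions. -/
def IsConservative (bar : α → α) (P : Set (α × List α)) (R R' : RAtms α) : Prop :=
  R ⊆ R' ∧ ∀ Γ, G3KmRules bar P R' Γ → G3KmRules bar P R Γ

namespace IsConservative

theorem refl (R : RAtms α) : IsConservative bar P R R :=
  ⟨Multiset.Subset.refl _, fun _ h => h⟩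

theorem trans {R'' : RAtms α} (h : IsConservative bar P R R') (h' : IsConservative bar P R' R'') :
    IsConservative bar P R R'' :=
  ⟨Multiset.Subset.trans h.1 h'.1, fun Γ hd => h.2 Γ (h'.2 Γ hd)⟩

theorem cons_conv {x : α} {w u : ℕ} (h : (x, w, u) ∈ R) :
    IsConservative bar P R ((bar x, u, w) ::ₘ R) := by
  refine ⟨Multiset.subset_cons _ _, fun Γ hd => ?_⟩
  obtain ⟨R, rfl⟩ := Multiset.exists_cons_of_mem h
  rw [Multiset.cons_swap] at hd
  exact .cnvr trivial hd

theorem cons_conv_conv (hbar : Function.Involutive bar) {x : α} {w u : ℕ} (h : (x, w, u) ∈ R) :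
    IsConservative bar P R ((x, w, u) ::ₘ (bar x, u, w) ::ₘ R) := by
  have hconv : IsConservative bar P ((bar x, u, w) ::ₘ R) _ :=
    cons_conv (Multiset.mem_cons_self _ _)
  rw [hbar] at hconv
  exact (cons_conv h).trans hconv

/-- A chain matched against a production rule may use an atom of `R` more often than `R` contains
it; two converse steps supply each missing copy. -/
theorem exists_le_of_subset (hbar : Function.Involutive bar) {C : RAtms α} (hC : C ⊆ R) :
    ∃ R', IsConservative bar P R R' ∧ C ≤ R' := by
  induction C using Multiset.induction_on with
  | empty => exact ⟨R, refl R, Multiset.zero_le _⟩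
  | cons a C ih =>
    obtain ⟨ha, hC⟩ := Multiset.cons_subset.1 hC
    obtain ⟨R', hR', hle⟩ := ih hC
    exact ⟨_, hR'.trans (cons_conv_conv hbar (hR'.1 ha)),
      Multiset.cons_le_cons _ (hle.trans (Multiset.le_cons_self _ _))⟩

theorem exists_mem_of_rule (hbar : Function.Involutive bar) {x : α} {s : List α} {w u : ℕ}
    {C : RAtms α} (hr : (x, s) ∈ P) (hchain : ChainR s w u C) (hC : C ⊆ R) :
    ∃ R', IsConservative bar P R R' ∧ (x, w, u) ∈ R' := by
  obtain ⟨_, hR', hle⟩ := exists_le_of_subset (P := P) hbar hC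
  obtain ⟨R', rfl⟩ := Multiset.le_iff_exists_add.1 hle
  have hrule : IsConservative bar P (C + R') (C + (x, w, u) ::ₘ R') :=
    ⟨by simp only [Multiset.add_cons, Multiset.subset_cons],
      fun _ hd => .prodr trivial hr hchain hd⟩
  exact ⟨_, hR'.trans hrule, by simp⟩

end IsConservative

/-- The atom `R_x wu` can be created from any extension of `R` without making more derivable. -/
def Creatable (bar : α → α) (P : Set (α × List α)) (R : RAtms α) (x : α) (w u : ℕ) : Prop :=
  ∀ S, R ⊆ S → ∃ S', IsConservative bar P S S' ∧ (x, w, u) ∈ S'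

theorem creatable_of_mem {x : α} {w u : ℕ} (h : (x, w, u) ∈ R) : Creatable bar P R x w u :=
  fun S hS => ⟨S, .refl S, hS h⟩

theorem creatable_mono (hR : R ⊆ R') : Creatable bar P R ≤ Creatable bar P R' :=
  fun _ _ _ h S hS => h S (Multiset.Subset.trans hR hS)

theorem exists_chainR_of_creatable {s : List α} {w u : ℕ} {S : RAtms α}
    (h : StringRel (Creatable bar P R) s w u) (hS : R ⊆ S) :
    ∃ S' C, IsConservative bar P S S' ∧ ChainR s w u C ∧ C ⊆ S' := by
  induction s generalizing w S with
  | nil =>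
    obtain rfl : w = u := h
    exact ⟨S, 0, .refl S, .nil w, Multiset.zero_subset _⟩
  | cons x s ih =>
    obtain ⟨v, hx, hs⟩ := h
    obtain ⟨S₁, hS₁, hm⟩ := hx S hS
    obtain ⟨S₂, C, hS₂, hchain, hC⟩ := ih hs (Multiset.Subset.trans hS hS₁.1)
    exact ⟨S₂, _, hS₁.trans hS₂, hchain.cons, Multiset.cons_subset.2 ⟨hS₂.1 hm, hC⟩⟩

theorem isFrame_creatable (hbar : Function.Involutive bar) (R : RAtms α) :
    IsFrame bar P (Creatable bar P R) where
  conv h S hS :=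
    let ⟨_, hS', hm⟩ := h S hS
    ⟨_, hS'.trans (.cons_conv hm), Multiset.mem_cons_self _ _⟩
  prod hr hs _ hS :=
    let ⟨_, _, hS₁, hchain, hC⟩ := exists_chainR_of_creatable hs hS
    let ⟨S₂, hS₂, hm⟩ := IsConservative.exists_mem_of_rule hbar hr hchain hC
    ⟨S₂, hS₁.trans hS₂, hm⟩

/-- The compound formula `w : φ` has been replaced by premises recorded in `R` and `H`. It is
`False` at literals and diamonds, which proof search never removes from the right-hand side. -/
def Decomposed (R : RAtms α) (H : LFmls α) (w : ℕ) : Fml α → Prop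
  | .pos _ | .neg _ | .dia _ _ => False
  | .or φ ψ => (w, φ) ∈ H ∧ (w, ψ) ∈ H
  | .and φ ψ => (w, φ) ∈ H ∨ (w, ψ) ∈ H
  | .box x φ => ∃ u, (x, w, u) ∈ R ∧ (u, φ) ∈ H

theorem Decomposed.mono {H H' : LFmls α} (hR : R ⊆ R') (hH : H ⊆ H') {w : ℕ} {φ : Fml α}
    (h : Decomposed R H w φ) : Decomposed R' H' w φ := by
  cases φ with
  | pos | neg | dia => exact h
  | or φ ψ => exact h.imp (@hH _) (@hH _)
  | and φ ψ => exact h.imp (@hH _) (@hH _)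
  | box x φ =>
    obtain ⟨u, hrel, hφ⟩ := h
    exact ⟨u, hR hrel, hH hφ⟩

theorem finite_setOf_occursIn (R : RAtms α) (Γ : LFmls α) : {u | occursIn u R Γ}.Finite := by
  classical
  refine (R.map (·.2.1) + R.map (·.2.2) + Γ.map (·.1)).toFinset.finite_toSet.subset ?_
  rintro u (⟨x, w, v, hm, rfl | rfl⟩ | ⟨φ, hm⟩)
  all_goals
    simp only [Finset.mem_coe, Multiset.mem_toFinset, Multiset.mem_add, Multiset.mem_map]
    grind

/-- States of the bottom-up proof search: an underivable sequent `R ⊢ Γ` together with the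
labelled formulae `H` that have occurred so far on the right-hand side. -/
structure SearchState (bar : α → α) (P : Set (α × List α)) where
  R : RAtms α
  Γ : LFmls α
  H : LFmls α
  not_derivable : ¬ G3KmRules bar P R Γ
  subset_history : Γ ⊆ H
  mem_or_decomposed : ∀ {w φ}, (w, φ) ∈ H → (w, φ) ∈ Γ ∨ Decomposed R H w φ

namespace SearchState

instance : Preorder (SearchState bar P) where
  le a b := a.R ⊆ b.R ∧ a.H ⊆ b.H
  le_refl _ := ⟨Multiset.Subset.refl _, Multiset.Subset.refl _⟩
  le_trans _ _ _ h h' := ⟨Multiset.Subset.trans h.1 h'.1, Multiset.Subset.trans h.2 h'.2⟩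

/-- The search state with which proof search for `R ⊢ Γ` starts. -/
def initial (h : ¬ G3KmRules bar P R Γ) : SearchState bar P where
  R := R
  Γ := Γ
  H := Γ
  not_derivable := h
  subset_history := Multiset.Subset.refl _
  mem_or_decomposed := .inl

theorem neg_notMem_of_pos_mem (a : SearchState bar P) {w p : ℕ} (hpos : (w, .pos p) ∈ a.H) :
    (w, .neg p) ∉ a.H := by
  intro hneg
  have hpos := (a.mem_or_decomposed hpos).resolve_right id
  have hneg := (a.mem_or_decomposed hneg).resolve_right id
  obtain ⟨Δ, hΔ⟩ := Multiset.exists_cons_of_mem hpos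
  rw [hΔ] at hneg
  obtain ⟨Δ, rfl⟩ := Multiset.exists_cons_of_mem
    ((Multiset.mem_cons.1 hneg).resolve_left (by simp))
  exact a.not_derivable (hΔ ▸ .id ..)

theorem exists_ge_replace (a : SearchState bar P) {Δ : LFmls α} {w : ℕ} {φ : Fml α}
    (hΓ : a.Γ = (w, φ) ::ₘ Γ) (hR : a.R ⊆ R') (hder : ¬ G3KmRules bar P R' (Δ + Γ))
    (hφ : (w, φ) ∈ Δ ∨ Decomposed R' (Δ + a.H) w φ) : ∃ b ≥ a, b.R = R' ∧ b.H = Δ + a.H := by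
  have hH : a.H ⊆ Δ + a.H := Multiset.subset_of_le (Multiset.le_add_left _ _)
  have hΓH : Γ ⊆ a.H := Multiset.Subset.trans (hΓ ▸ Multiset.subset_cons _ _) a.subset_history
  refine ⟨⟨R', Δ + Γ, Δ + a.H, hder, ?_, ?_⟩, ⟨hR, hH⟩, rfl, rfl⟩
  · intro b hb
    exact Multiset.mem_add.2 ((Multiset.mem_add.1 hb).imp_right (@hΓH b))
  · intro v ψ hψ
    simp only [Multiset.mem_add] at hψ ⊢
    rcases hψ with hψ | hψ
    · exact .inl (.inl hψ)
    rcases a.mem_or_decomposed hψ with hψ | hdec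
    · rw [hΓ, Multiset.mem_cons, Prod.mk.injEq] at hψ
      rcases hψ with ⟨rfl, rfl⟩ | hψ
      · exact hφ.imp_left .inl
      · exact .inl (.inr hψ)
    · exact .inr (hdec.mono hR hH)

theorem exists_ge_decomposed (a : SearchState bar P) {Δ : LFmls α} {w : ℕ} {φ : Fml α}
    (hΓ : a.Γ = (w, φ) ::ₘ Γ) (hR : a.R ⊆ R') (hder : ¬ G3KmRules bar P R' (Δ + Γ))
    (hφ : Decomposed R' (Δ + a.H) w φ) : ∃ b ≥ a, Decomposed b.R b.H w φ := by
  obtain ⟨b, hab, hbR, hbH⟩ := a.exists_ge_replace hΓ hR hder (.inr hφ)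
  exact ⟨b, hab, by rwa [hbR, hbH]⟩

theorem exists_ge_decomposed_or (a : SearchState bar P) {w : ℕ} {φ ψ : Fml α}
    (h : (w, .or φ ψ) ∈ a.Γ) : ∃ b ≥ a, Decomposed b.R b.H w (.or φ ψ) := by
  obtain ⟨Γ, hΓ⟩ := Multiset.exists_cons_of_mem h
  refine a.exists_ge_decomposed (Δ := {(w, φ), (w, ψ)}) hΓ (Multiset.Subset.refl _)
    (fun hd => a.not_derivable ?_) (by simp [Decomposed])
  rw [hΓ]
  exact .orr (by simpa using hd)

theorem exists_ge_decomposed_and (a : SearchState bar P) {w : ℕ} {φ ψ : Fml α}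
    (h : (w, .and φ ψ) ∈ a.Γ) : ∃ b ≥ a, Decomposed b.R b.H w (.and φ ψ) := by
  obtain ⟨Γ, hΓ⟩ := Multiset.exists_cons_of_mem h
  by_cases hφ : G3KmRules bar P a.R ((w, φ) ::ₘ Γ)
  · refine a.exists_ge_decomposed (Δ := {(w, ψ)}) hΓ (Multiset.Subset.refl _)
      (fun hψ => a.not_derivable ?_) (by simp [Decomposed])
    rw [hΓ]
    exact .andr hφ (by simpa using hψ)
  · exact a.exists_ge_decomposed (Δ := {(w, φ)}) hΓ (Multiset.Subset.refl _)
      (by simpa using hφ) (by simp [Decomposed])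

theorem exists_ge_decomposed_box (a : SearchState bar P) {w : ℕ} {x : α} {φ : Fml α}
    (h : (w, .box x φ) ∈ a.Γ) : ∃ b ≥ a, Decomposed b.R b.H w (.box x φ) := by
  obtain ⟨Γ, hΓ⟩ := Multiset.exists_cons_of_mem h
  obtain ⟨u, hu⟩ : ∃ u, ¬ occursIn u a.R a.Γ := (finite_setOf_occursIn _ _).exists_notMem
  refine a.exists_ge_decomposed (R' := (x, w, u) ::ₘ a.R) (Δ := {(u, φ)}) hΓ
    (Multiset.subset_cons _ _) (fun hd => a.not_derivable ?_) ⟨u, by simp, by simp⟩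
  rw [hΓ] at hu ⊢
  exact .boxr hu (by simpa using hd)

theorem exists_ge_mem_of_creatable (a : SearchState bar P) {w u : ℕ} {x : α} {φ : Fml α}
    (h : (w, .dia x φ) ∈ a.H) (hrel : Creatable bar P a.R x w u) :
    ∃ b ≥ a, (u, φ) ∈ b.H := by
  obtain ⟨Γ, hΓ⟩ := Multiset.exists_cons_of_mem ((a.mem_or_decomposed h).resolve_right id)
  obtain ⟨S, hS, hm⟩ := hrel a.R (Multiset.Subset.refl _)
  obtain ⟨S, rfl⟩ := Multiset.exists_cons_of_mem hm
  have hder : ¬ G3KmRules bar P ((x, w, u) ::ₘ S) ({(w, .dia x φ), (u, φ)} + Γ) := by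
    refine fun hd => a.not_derivable (hS.2 _ ?_)
    rw [hΓ]
    exact .diar trivial (by simpa using hd)
  obtain ⟨b, hab, -, hbH⟩ := a.exists_ge_replace hΓ hS.1 hder (.inl (by simp))
  exact ⟨b, hab, by simp [hbH]⟩

/-- What fair proof search owes to the formula `w : φ` and the label `u`, given the accessibility
relations `Rel` of the stage at which the obligation arose. Only diamonds depend on `u`. -/
def Discharged (Rel : α → ℕ → ℕ → Prop) (b : SearchState bar P) (w u : ℕ) : Fml α → Prop
  | .pos _ | .neg _ => True
  | .dia x φ => Rel x w u → (u, φ) ∈ b.H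
  | φ => Decomposed b.R b.H w φ

theorem Discharged.mono {Rel : α → ℕ → ℕ → Prop} {b c : SearchState bar P} (hbc : b ≤ c)
    {w u : ℕ} {φ : Fml α} (h : Discharged Rel b w u φ) : Discharged Rel c w u φ := by
  cases φ with
  | pos | neg => trivial
  | dia x φ => exact fun hrel => hbc.2 (h hrel)
  | or | and | box =>
    simp only [Discharged] at h ⊢
    exact h.mono hbc.1 hbc.2

theorem exists_ge_discharged {a b : SearchState bar P} (hab : a ≤ b) {w : ℕ} {φ : Fml α}
    (h : (w, φ) ∈ a.H) (u : ℕ) : ∃ c ≥ b, Discharged (Creatable bar P a.R) c w u φ := by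
  have hb := b.mem_or_decomposed (hab.2 h)
  cases φ with
  | pos | neg => exact ⟨b, le_rfl, trivial⟩
  | or => exact hb.elim b.exists_ge_decomposed_or fun hdec => ⟨b, le_rfl, hdec⟩
  | and => exact hb.elim b.exists_ge_decomposed_and fun hdec => ⟨b, le_rfl, hdec⟩
  | box => exact hb.elim b.exists_ge_decomposed_box fun hdec => ⟨b, le_rfl, hdec⟩
  | dia x φ =>
    by_cases hrel : Creatable bar P a.R x w u
    · obtain ⟨c, hbc, hm⟩ :=
        b.exists_ge_mem_of_creatable (hab.2 h) (creatable_mono hab.1 _ _ _ hrel)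
      exact ⟨c, hbc, fun _ => hm⟩
    · exact ⟨b, le_rfl, fun h => absurd h hrel⟩

theorem exists_ge_forall_discharged (a : SearchState bar P) (n : ℕ) :
    ∃ b ≥ a, ∀ w φ, (w, φ) ∈ a.H → ∀ u ≤ n, Discharged (Creatable bar P a.R) b w u φ := by
  obtain ⟨b, hab, hb⟩ := exists_ge_forall_mem
    (Done := fun (i : (ℕ × Fml α) × ℕ) b => Discharged (Creatable bar P a.R) b i.1.1 i.2 i.1.2)
    (T := a.H ×ˢ Multiset.range (n + 1)) (fun _ _ _ hbc => Discharged.mono hbc)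
    fun i hi _ hab => exists_ge_discharged hab (Multiset.mem_product.1 hi).1 i.2
  exact ⟨b, hab, fun w φ h u hu => hb ((w, φ), u)
    (Multiset.mem_product.2 ⟨h, Multiset.mem_range.2 (Nat.lt_succ_of_le hu)⟩)⟩

/-- Fair runs of the proof search: at stage `n`, every formula seen so far is treated with respect
to all labels up to `n`. -/
structure IsFairRun (st : ℕ → SearchState bar P) : Prop where
  monotone : Monotone st
  discharged : ∀ {n w φ}, (w, φ) ∈ (st n).H → ∀ {u}, u ≤ n →
    Discharged (Creatable bar P (st n).R) (st (n + 1)) w u φ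

theorem exists_isFairRun (a : SearchState bar P) : ∃ st, st 0 = a ∧ IsFairRun st := by
  choose next le_next hnext using exists_ge_forall_discharged (bar := bar) (P := P)
  let st (n : ℕ) : SearchState bar P := Nat.rec a (fun n b => next b n) n
  exact ⟨st, rfl, monotone_nat_of_le_succ fun n => le_next (st n) n,
    fun {n _ _} h _ hu => hnext (st n) n _ _ h _ hu⟩

/-- The limit of a run: all labelled formulae occurring in it. -/
def limitHistory (st : ℕ → SearchState bar P) : Set (ℕ × Fml α) :=
  {a | ∃ n, a ∈ (st n).H}

/-- The accessibility relations of the limit of a run. -/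
def limitRel (st : ℕ → SearchState bar P) (x : α) (w u : ℕ) : Prop :=
  ∃ n, Creatable bar P (st n).R x w u

theorem isFrame_limitRel (hbar : Function.Involutive bar) {st : ℕ → SearchState bar P}
    (hst : Monotone st) : IsFrame bar P (limitRel st) :=
  .exists_of_monotone (fun _ _ hmn => creatable_mono (hst hmn).1)
    fun n => isFrame_creatable hbar (st n).R

theorem IsFairRun.isHintikka {st : ℕ → SearchState bar P} (hst : IsFairRun st) :
    IsHintikka (limitRel st) (limitHistory st) where
  lit := fun ⟨m, hpos⟩ ⟨n, hneg⟩ =>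
    (st (max m n)).neg_notMem_of_pos_mem (hst.monotone (le_max_left m n) |>.2 hpos)
      (hst.monotone (le_max_right m n) |>.2 hneg)
  or := fun ⟨n, h⟩ => (hst.discharged h n.zero_le).imp (⟨n + 1, ·⟩) (⟨n + 1, ·⟩)
  and := fun ⟨n, h⟩ => (hst.discharged h n.zero_le).imp (⟨n + 1, ·⟩) (⟨n + 1, ·⟩)
  dia := by
    rintro w u x φ ⟨m, h⟩ ⟨n, hrel⟩
    obtain ⟨k, ⟨hmk, hnk⟩, huk⟩ : ∃ k, (m ≤ k ∧ n ≤ k) ∧ u ≤ k :=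
      ⟨max (max m n) u, by omega, by omega⟩
    exact ⟨k + 1, hst.discharged ((hst.monotone hmk).2 h) huk
      (creatable_mono (hst.monotone hnk).1 _ _ _ hrel)⟩
  box := fun ⟨n, h⟩ =>
    let ⟨u, hrel, hφ⟩ := hst.discharged h n.zero_le
    ⟨u, ⟨n + 1, creatable_of_mem hrel⟩, n + 1, hφ⟩

end SearchState

theorem exists_isFrame_not_holds (hbar : Function.Involutive bar)
    (h : ¬ G3KmRules bar P R Γ) :
    ∃ (Rel : α → ℕ → ℕ → Prop) (V : ℕ → ℕ → Prop), IsFrame bar P Rel ∧ ¬ Holds Rel V R Γ := by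
  obtain ⟨st, hst₀, hst⟩ := SearchState.exists_isFairRun (.initial h)
  refine ⟨SearchState.limitRel st, fun v p => (v, .neg p) ∈ SearchState.limitHistory st,
    SearchState.isFrame_limitRel hbar hst.monotone, fun hholds => ?_⟩
  obtain ⟨⟨w, φ⟩, hm, hφ⟩ := hholds id fun x w u hm => ⟨0, creatable_of_mem (by rwa [hst₀])⟩
  exact hst.isHintikka.not_sat ⟨0, by rwa [hst₀]⟩ hφ

theorem kmLStr_to_g3Km_general (hbar : Function.Involutive bar) (h : KmLStr bar P R Γ) :
    G3KmRules bar P R Γ := by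
  by_contra hder
  obtain ⟨_, _, hF, hholds⟩ := exists_isFrame_not_holds hbar hder
  exact hholds (h.holds hbar hF)

end ProofSearch

/-- Let `S` be a CFCST system over `Σ`.  Every labelled sequent
derivable in `Km(S)L + Str(Km)` is derivable in `G3Km(S)`. -/
theorem kmLStr_to_g3Km {α : Type} (bar : α → α) (hbar : Function.Involutive bar)
    (S : CFCST α bar) (R : RAtms α) (Γ : LFmls α)
    (h : KmLStr bar S.rules R Γ) : G3Km bar S R Γ :=
  kmLStr_to_g3Km_general hbar h

end GrammarLogic
end
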